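/- Let G be a finite connected cactus containing at least one cycle, let g be its girth (which is finite), and let a ≥ b ≥ 1 be integers. If g ≥ 4, or if every cycle of G has length three, then fsep(G, a, b) = fsep(C_g, a, b). -/

import Mathlib

open SimpleGraph Finset

/-- An `(L,b)`-coloring of `G`: each vertex `v` receives a set `φ v ⊆ L v` with
`|φ v| = b`, and adjacent vertices receive disjoint sets. -/
def IsLbColoring {V : Type*} (G : SimpleGraph V) (L : V → Finset ℕ) (b : ℕ)
    (φ : V → Finset ℕ) : Prop :=
  (∀ v, φ v ⊆ L v ∧ (φ v).card = b) ∧ ∀ u v, G.Adj u v → φ u ∩ φ v = ∅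

/-- `G` is `(a,b,c)`-choosable: every `c`-separating `a`-list assignment admits an
`(L,b)`-coloring. -/
def Choosable {V : Type*} (G : SimpleGraph V) (a b c : ℕ) : Prop :=
  ∀ L : V → Finset ℕ, (∀ v, (L v).card = a) →
    (∀ u v, G.Adj u v → (L u ∩ L v).card ≤ c) →
    ∃ φ, IsLbColoring G L b φ

/-- `G` is `(a,b,c)`-free-choosable: for every `c`-separating `a`-list assignment,
any precoloring of one vertex by a `b`-subset of its list extends to an `(L,b)`-coloring. -/
def FreeChoosable {V : Type*} (G : SimpleGraph V) (a b c : ℕ) : Prop :=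
  ∀ L : V → Finset ℕ, (∀ v, (L v).card = a) →
    (∀ u v, G.Adj u v → (L u ∩ L v).card ≤ c) →
    ∀ (v₀ : V) (C : Finset ℕ), C ⊆ L v₀ → C.card = b →
      ∃ φ, IsLbColoring G L b φ ∧ φ v₀ = C

/-- The separation number `sep(G,a,b)`: the largest `c ≤ a` such that `G` is
`(a,b,c)`-choosable. -/
noncomputable def sep {V : Type*} (G : SimpleGraph V) (a b : ℕ) : ℕ :=
  sSup {c | c ≤ a ∧ Choosable G a b c}

/-- The free-separation number `fsep(G,a,b)`: the largest `c ≤ a` such that `G` is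
`(a,b,c)`-free-choosable. -/
noncomputable def fsep {V : Type*} (G : SimpleGraph V) (a b : ℕ) : ℕ :=
  sSup {c | c ≤ a ∧ FreeChoosable G a b c}

/-- A cactus: a connected graph in which every edge belongs to at most one cycle
(any two cycles sharing an edge have the same edge set). -/
def IsCactus {V : Type*} (G : SimpleGraph V) : Prop :=
  G.Connected ∧ ∀ (u v : V) (p : G.Walk u u) (q : G.Walk v v),
    p.IsCycle → q.IsCycle → (∃ e, e ∈ p.edges ∧ e ∈ q.edges) →
      ∀ e, e ∈ p.edges ↔ e ∈ q.edges

/-!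
Deleting a bridge, or the edges of a cycle, from a cactus separates the vertices that were
incident to the deleted edges, and colorings of the pieces can be glued if one vertex of each may be
prescribed. So, once single edges are free-choosable, a cactus is free-choosable as soon as all its
cycles are. Conversely, the cycles of a cactus are induced, and a list assignment of an induced
cycle extends to the whole graph by giving new colors to the other vertices. It remains to see that
a cycle is at least as easy to color as a shorter one of length at least four.

Once a vertex of a cycle is colored, a path remains whose end lists have lost at most `min b c`
colors each. By a theorem of Hall's type the path is colorable if on every interval of it the
largest independent sets available to the individual colors together cover the demand. The supply
is smallest when consecutive lists share as many colors as possible, given that two successive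
overlaps have total size at most `a`; this turns the criterion into the single inequality
`CycleBound`, which is monotone in the length. The extremal overlaps are realized by lists as soon
as the length is at least four. On a triangle they are not, since the two uncolored vertices also
share the colors that they both lose.
-/

section Coloring

variable {V W : Type*} {G : SimpleGraph V} {a b c : ℕ}

/-- The `i`-th of countably many disjoint copies of the set of colors. -/
def tagColor (i : ℕ) : ℕ ↪ ℕ :=
  ⟨Nat.pair i, fun _ _ h => (Nat.pair_eq_pair.1 h).2⟩

theorem disjoint_map_tagColor {i j : ℕ} (hij : i ≠ j) (s t : Finset ℕ) :
    Disjoint (s.map (tagColor i)) (t.map (tagColor j)) := by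
  simp only [Finset.disjoint_left, Finset.mem_map]
  rintro _ ⟨k, -, rfl⟩ ⟨l, -, h⟩
  exact hij (Nat.pair_eq_pair.1 h).1.symm

/-- A set of `t` colors; blocks with distinct indices `i` are disjoint. -/
def colorBlock (i t : ℕ) : Finset ℕ :=
  (range t).map (tagColor i)

@[simp]
theorem card_colorBlock (i t : ℕ) : (colorBlock i t).card = t := by
  simp [colorBlock]

theorem mem_colorBlock {i t k : ℕ} :
    k ∈ colorBlock i t ↔ k.unpair.1 = i ∧ k.unpair.2 < t := by
  simp only [colorBlock, Finset.mem_map, mem_range]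
  constructor
  · rintro ⟨j, hj, rfl⟩
    rw [show tagColor i j = Nat.pair i j from rfl, Nat.unpair_pair]
    exact ⟨rfl, hj⟩
  · rintro ⟨rfl, hk⟩
    exact ⟨_, hk, Nat.pair_unpair k⟩

theorem colorBlock_subset_colorBlock (i : ℕ) {s t : ℕ} (h : s ≤ t) :
    colorBlock i s ⊆ colorBlock i t :=
  Finset.map_subset_map.2 (Finset.range_subset_range.2 h)

theorem disjoint_colorBlock {i j : ℕ} (hij : i ≠ j) (s t : ℕ) :
    Disjoint (colorBlock i s) (colorBlock j t) :=
  disjoint_map_tagColor hij _ _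

theorem freeChoosable_bot (hba : b ≤ a) : FreeChoosable (⊥ : SimpleGraph V) a b c := by
  classical
  intro L hL _ v₀ C hC hCb
  choose D hD using fun v => Finset.exists_subset_card_eq ((hL v).symm ▸ hba)
  refine ⟨Function.update D v₀ C, ⟨fun v => ?_, fun u v h => h.elim⟩, by simp⟩
  rcases eq_or_ne v v₀ with rfl | hv
  · simpa using ⟨hC, hCb⟩
  · simpa [hv] using hD v

theorem FreeChoosable.choosable (h : FreeChoosable G a b c) (hba : b ≤ a) :
    Choosable G a b c := by
  intro L hL hsep
  rcases isEmpty_or_nonempty V with hV | ⟨⟨v⟩⟩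
  · exact ⟨fun _ => ∅, fun v => hV.elim v, fun v => hV.elim v⟩
  · obtain ⟨C, hC, hCb⟩ := Finset.exists_subset_card_eq ((hL v).symm ▸ hba)
    obtain ⟨φ, hφ, -⟩ := h L hL hsep v C hC hCb
    exact ⟨φ, hφ⟩

theorem FreeChoosable.map {H : SimpleGraph W} (hH : FreeChoosable H a b c) (hba : b ≤ a)
    (f : W ↪ V) : FreeChoosable (H.map f) a b c := by
  intro L hL hsep v₀ C hC hCb
  obtain ⟨D, ⟨hD, -⟩, hDC⟩ :=
    freeChoosable_bot (c := c) hba L hL (fun _ _ h => h.elim) v₀ C hC hCb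
  have hsepf (i j : W) (hij : H.Adj i j) : (L (f i) ∩ L (f j)).card ≤ c :=
    hsep _ _ ((map_adj ..).2 ⟨i, j, hij, rfl, rfl⟩)
  obtain ⟨ψ, hψ, hψC⟩ : ∃ ψ, IsLbColoring H (L ∘ f) b ψ ∧ ∀ i, f i = v₀ → ψ i = C := by
    by_cases hv : ∃ i, f i = v₀
    · obtain ⟨i, rfl⟩ := hv
      obtain ⟨ψ, hψ, hi⟩ := hH _ (fun i => hL (f i)) hsepf i C hC hCb
      exact ⟨ψ, hψ, fun j hj => f.injective hj ▸ hi⟩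
    · obtain ⟨ψ, hψ⟩ := hH.choosable hba _ (fun i => hL (f i)) hsepf
      exact ⟨ψ, hψ, fun i hi => (hv ⟨i, hi⟩).elim⟩
  have hext (i : W) : Function.extend f ψ D (f i) = ψ i := f.injective.extend_apply ψ D i
  refine ⟨Function.extend f ψ D, ⟨fun v => ?_, fun u v huv => ?_⟩, ?_⟩
  · by_cases hv : ∃ i, f i = v
    · obtain ⟨i, rfl⟩ := hv
      rw [hext]
      exact hψ.1 i
    · rw [Function.extend_apply' _ _ _ hv]
      exact hD v
  · obtain ⟨i, j, hij, rfl, rfl⟩ := (map_adj ..).1 huv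
    rw [hext, hext]
    exact hψ.2 i j hij
  · by_cases hv : ∃ i, f i = v₀
    · obtain ⟨i, hi⟩ := hv
      rw [← hi, hext, hψC i hi]
    · rw [Function.extend_apply' _ _ _ hv, hDC]

/-- The vertices outside the induced copy of `H` get lists of new colors; indexing these lists by a
proper coloring `κ` of `G` needs only countably many colors, whatever the size of `V`. -/
theorem exists_listAssignment_extend {H : SimpleGraph W} (f : H ↪g G) (κ : G.Coloring ℕ)
    {L : W → Finset ℕ} (hL : ∀ w, (L w).card = a)
    (hsep : ∀ u v, H.Adj u v → (L u ∩ L v).card ≤ c) :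
    ∃ M : V → Finset ℕ, (∀ v, (M v).card = a) ∧
      (∀ u v, G.Adj u v → (M u ∩ M v).card ≤ c) ∧ ∀ w, M (f w) = (L w).map (tagColor 0) := by
  let M : V → Finset ℕ := Function.extend f (fun w => (L w).map (tagColor 0))
    fun v => colorBlock (κ v + 1) a
  have hM (w : W) : M (f w) = (L w).map (tagColor 0) := f.injective.extend_apply _ _ w
  have hM' (v : V) (hv : ¬∃ w, f w = v) : M v = colorBlock (κ v + 1) a :=
    Function.extend_apply' _ _ v hv
  have hdisj {u v : V} (h : Disjoint (M u) (M v)) : (M u ∩ M v).card ≤ c := by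
    rw [Finset.disjoint_iff_inter_eq_empty.1 h, Finset.card_empty]
    exact c.zero_le
  refine ⟨M, fun v => ?_, fun u v huv => ?_, hM⟩
  · by_cases hv : ∃ w, f w = v
    · obtain ⟨w, rfl⟩ := hv
      rw [hM, Finset.card_map, hL]
    · rw [hM' v hv, card_colorBlock]
  · by_cases hu : ∃ w, f w = u <;> by_cases hv : ∃ w, f w = v
    · obtain ⟨⟨x, rfl⟩, ⟨y, rfl⟩⟩ := hu, hv
      rw [hM, hM, ← Finset.map_inter, Finset.card_map]
      exact hsep x y (f.map_adj_iff.1 huv)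
    · obtain ⟨x, rfl⟩ := hu
      exact hdisj (hM x ▸ hM' v hv ▸ disjoint_map_tagColor (κ v).succ_ne_zero.symm _ _)
    · obtain ⟨y, rfl⟩ := hv
      exact hdisj (hM y ▸ hM' u hu ▸ disjoint_map_tagColor (κ u).succ_ne_zero _ _)
    · exact hdisj (hM' u hu ▸ hM' v hv ▸ disjoint_colorBlock (by simpa using κ.valid huv) _ _)

theorem FreeChoosable.comap {H : SimpleGraph W} (hG : FreeChoosable G a b c) (f : H ↪g G)
    (κ : G.Coloring ℕ) : FreeChoosable H a b c := by
  intro L hL hsep w₀ C hC hCb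
  obtain ⟨M, hMa, hMc, hM⟩ := exists_listAssignment_extend f κ hL hsep
  obtain ⟨φ, hφ, hφC⟩ := hG M hMa hMc (f w₀) (C.map (tagColor 0))
    (by rw [hM]; exact Finset.map_subset_map.2 hC) (by rw [Finset.card_map, hCb])
  choose ψ hψL hψ using fun w => Finset.subset_map_iff.1 (hM w ▸ (hφ.1 (f w)).1)
  refine ⟨ψ, ⟨fun w => ⟨hψL w, ?_⟩, fun u v huv => ?_⟩, ?_⟩
  · rw [← Finset.card_map (tagColor 0), ← hψ, (hφ.1 _).2]
  · simpa [hψ, ← Finset.map_inter] using hφ.2 _ _ (f.map_adj_iff.2 huv)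
  · exact Finset.map_injective (tagColor 0) (by rw [← hψ, hφC])

theorem freeChoosable_edge (hba : b + min b c ≤ a) {u v : V} (huv : u ≠ v) :
    FreeChoosable (edge u v) a b c := by
  classical
  intro L hL hsep v₀ C hC hCb
  wlog hv : v ≠ v₀ generalizing u v
  · have hu : u ≠ v₀ := fun h => huv (by rw [h, not_not.1 hv])
    rw [edge_comm] at hsep ⊢
    exact this huv.symm hsep hu
  obtain ⟨D, ⟨hD, -⟩, hDC⟩ :=
    freeChoosable_bot (c := c) (by omega) L hL (fun _ _ h => h.elim) v₀ C hC hCb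
  have hcard : b ≤ (L v \ D u).card := by
    have hc : (D u ∩ L v).card ≤ c :=
      (Finset.card_le_card (Finset.inter_subset_inter_right (hD u).1)).trans
        (hsep u v (by simp [edge_adj, huv]))
    have hb : (D u ∩ L v).card ≤ b := (hD u).2 ▸ Finset.card_le_card Finset.inter_subset_left
    have := Finset.card_sdiff (s := D u) (t := L v)
    have := hL v
    omega
  obtain ⟨E, hE, hEb⟩ := Finset.exists_subset_card_eq hcard
  have hDE : Disjoint (D u) E := (Finset.disjoint_of_subset_left hE Finset.sdiff_disjoint).symm
  refine ⟨Function.update D v E, ⟨fun w => ?_, fun x y hxy => ?_⟩, ?_⟩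
  · rcases eq_or_ne w v with rfl | hw
    · simpa using ⟨hE.trans Finset.sdiff_subset, hEb⟩
    · simpa [hw] using hD w
  · rw [← Finset.disjoint_iff_inter_eq_empty]
    obtain ⟨⟨rfl, rfl⟩ | ⟨rfl, rfl⟩, -⟩ := (edge_adj ..).1 hxy
    · simpa [huv] using hDE
    · simpa [huv] using hDE.symm
  · rw [Function.update_of_ne hv.symm, hDC]

theorem IsLbColoring.glue {L : V → Finset ℕ} {χ : G.ConnectedComponent → V → Finset ℕ}
    (hχ : ∀ K, IsLbColoring G L b (χ K)) :
    IsLbColoring G L b fun v => χ (G.connectedComponentMk v) v := by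
  refine ⟨fun v => (hχ _).1 v, fun u v huv => ?_⟩
  simp only [ConnectedComponent.connectedComponentMk_eq_of_adj huv]
  exact (hχ _).2 u v huv

theorem FreeChoosable.sup {H : SimpleGraph V} (hG : FreeChoosable G a b c)
    (hH : FreeChoosable H a b c)
    (hGH : ∀ u ∈ H.support, ∀ v ∈ H.support, G.Reachable u v → u = v) :
    FreeChoosable (G ⊔ H) a b c := by
  intro L hL hsep v₀ C hC hCb
  have hLG (u v : V) (h : G.Adj u v) : (L u ∩ L v).card ≤ c := hsep u v (Or.inl h)
  have hLH (u v : V) (h : H.Adj u v) : (L u ∩ L v).card ≤ c := hsep u v (Or.inr h)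
  obtain ⟨φ, hφ, hφC⟩ := hG L hL hLG v₀ C hC hCb
  obtain ⟨ψ, hψ, hψφ⟩ : ∃ ψ, IsLbColoring H L b ψ ∧
      ∀ r ∈ H.support, G.Reachable v₀ r → ψ r = φ r := by
    by_cases hr : ∃ r ∈ H.support, G.Reachable v₀ r
    · obtain ⟨r, hrH, hrr⟩ := hr
      obtain ⟨ψ, hψ, h⟩ := hH L hL hLH r (φ r) (hφ.1 r).1 (hφ.1 r).2
      refine ⟨ψ, hψ, fun s hs hsr => ?_⟩
      rw [← hGH r hrH s hs (hrr.symm.trans hsr), h]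
    · obtain ⟨ψ, hψ, -⟩ := hH L hL hLH v₀ C hC hCb
      exact ⟨ψ, hψ, fun r hr' h => (hr ⟨r, hr', h⟩).elim⟩
  have hcomp (K : G.ConnectedComponent) : ∃ χ, IsLbColoring G L b χ ∧
      (∀ s ∈ H.support, G.connectedComponentMk s = K → χ s = ψ s) ∧
      (G.connectedComponentMk v₀ = K → χ v₀ = C) := by
    by_cases hK : G.connectedComponentMk v₀ = K
    · subst hK
      exact ⟨φ, hφ, fun s hs h => (hψφ s hs (ConnectedComponent.exact h.symm)).symm, fun _ => hφC⟩
    by_cases hs : ∃ s ∈ H.support, G.connectedComponentMk s = K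
    · obtain ⟨s, hsH, rfl⟩ := hs
      obtain ⟨χ, hχ, hχs⟩ := hG L hL hLG s (ψ s) (hψ.1 s).1 (hψ.1 s).2
      refine ⟨χ, hχ, fun t ht h => ?_, fun h => (hK h).elim⟩
      rw [hGH t ht s hsH (ConnectedComponent.exact h), hχs]
    · exact ⟨φ, hφ, fun s hs' h => (hs ⟨s, hs', h⟩).elim, fun h => (hK h).elim⟩
  choose χ hχ hχψ hχC using hcomp
  refine ⟨fun v => χ (G.connectedComponentMk v) v, ⟨(IsLbColoring.glue hχ).1, ?_⟩, hχC _ rfl⟩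
  rintro u v (huv | huv)
  · exact (IsLbColoring.glue hχ).2 u v huv
  · simp only [hχψ _ u ⟨v, huv⟩ rfl, hχψ _ v ⟨u, huv.symm⟩ rfl]
    exact hψ.2 u v huv

theorem freeChoosable_of_forall_finite_induce
    (h : ∀ s : Set V, s.Finite → FreeChoosable (G.induce s) a b c) : FreeChoosable G a b c := by
  classical
  intro L hL hsep v₀ C hC hCb
  have hfin (s : Finset V) : ∃ φ : (v : V) → (L v).powerset, ∀ u ∈ insert v₀ s, ∀ v ∈ insert v₀ s,
      (φ u).1.card = b ∧ (G.Adj u v → (φ u).1 ∩ (φ v).1 = ∅) ∧ (φ v₀).1 = C := by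
    obtain ⟨φ, hφ, hφC⟩ := h (insert v₀ s : Finset V) (Finset.finite_toSet _) (fun v => L v)
      (fun v => hL v) (fun u v huv => hsep u v huv) ⟨v₀, by simp⟩ C hC hCb
    refine ⟨fun v => if hv : v ∈ insert v₀ s then ⟨φ ⟨v, hv⟩, by simpa using (hφ.1 _).1⟩ else
      ⟨∅, by simp⟩, fun u hu v hv => ?_⟩
    simp only [hu, hv, Finset.mem_insert_self, dite_true]
    exact ⟨(hφ.1 _).2, fun huv => hφ.2 ⟨u, hu⟩ ⟨v, hv⟩ huv, hφC⟩
  choose φ hφ using hfin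
  obtain ⟨χ, hχ⟩ := Finset.rado_selection φ
  have hpair (u v : V) : (χ u).1.card = b ∧ (G.Adj u v → (χ u).1 ∩ (χ v).1 = ∅) ∧
      (χ v₀).1 = C := by
    obtain ⟨t, ht, hχt⟩ := hχ {u, v, v₀}
    rw [hχt u (by simp), hχt v (by simp), hχt v₀ (by simp)]
    exact hφ t u (Finset.mem_insert_of_mem (ht (by simp))) v
      (Finset.mem_insert_of_mem (ht (by simp)))
  exact ⟨fun v => χ v, ⟨fun v => ⟨Finset.mem_powerset.1 (χ v).2, (hpair v v).1⟩,
    fun u v => (hpair u v).2.1⟩, (hpair v₀ v₀).2.2⟩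

end Coloring

section CactusForest

variable {V W : Type*} {G : SimpleGraph V} {H : SimpleGraph W} {a b c n : ℕ}

/-- A graph, not necessarily connected, in which every edge belongs to at most one cycle: two cycles
sharing an edge have the same edge set. A cactus is a connected cactus forest. -/
def IsCactusForest (G : SimpleGraph V) : Prop :=
  ∀ (u v : V) (p : G.Walk u u) (q : G.Walk v v),
    p.IsCycle → q.IsCycle → (∃ e, e ∈ p.edges ∧ e ∈ q.edges) →
      ∀ e, e ∈ p.edges ↔ e ∈ q.edges

theorem IsCactusForest.of_isContained (hG : IsCactusForest G) (hHG : H ⊑ G) :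
    IsCactusForest H := by
  obtain ⟨f⟩ := hHG
  have hmem {w : W} (p : H.Walk w w) (e : Sym2 W) :
      e.map f.toHom ∈ (p.map f.toHom).edges ↔ e ∈ p.edges := by
    rw [Walk.edges_map, List.mem_map_of_injective (Sym2.map.injective f.injective)]
  intro u v p q hp hq ⟨e, hep, heq⟩ e'
  rw [← hmem p, ← hmem q]
  exact hG _ _ _ _ (hp.map f.injective) (hq.map f.injective)
    ⟨_, (hmem p e).2 hep, (hmem q e).2 heq⟩ _

theorem exists_isCycle_mem_edges_notMem_edges {u y : V} {e : Sym2 V} (huy : G.Adj u y)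
    (he : s(u, y) ≠ e) (hreach : (G.deleteEdges {e, s(u, y)}).Reachable u y) :
    ∃ (w : V) (p : G.Walk w w), p.IsCycle ∧ s(u, y) ∈ p.edges ∧ e ∉ p.edges := by
  rw [Set.insert_eq, ← deleteEdges_deleteEdges] at hreach
  obtain ⟨w, p, hp, hmem⟩ := adj_and_reachable_delete_edges_iff_exists_cycle.1
    ⟨deleteEdges_adj.2 ⟨huy, he⟩, hreach⟩
  have hle : G.deleteEdges {e} ≤ G := deleteEdges_le _
  refine ⟨w, p.mapLe hle, hp.mapLe hle, by simpa using hmem, fun h => ?_⟩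
  rw [Walk.edges_mapLe_eq_edges] at h
  simpa using p.edges_subset_edgeSet h

/-- The cycle `p` runs `u, y, …, v, z, …, u`. Without the edge `vz`, the connection from `u` to `v`
avoiding `p` closes up with the arc `u, y, …, v` to a second cycle through the edge `uy`. -/
theorem IsCactusForest.not_reachable_deleteEdges (hG : IsCactusForest G) {x u v : V}
    {p : G.Walk x x} (hp : p.IsCycle) (hu : u ∈ p.support) (hv : v ∈ p.support) (huv : u ≠ v) :
    ¬(G.deleteEdges {e | e ∈ p.edges}).Reachable u v := by
  classical
  intro hreach
  have hvr : v ∈ (p.rotate u hu).support := (Walk.mem_support_rotate_iff p u hu).2 hv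
  have hspec := (p.rotate u hu).take_spec hvr
  have hmem (e : Sym2 V) : e ∈ p.edges ↔ e ∈ (p.rotate u hu).edges :=
    (p.rotate_edges u hu).mem_iff.symm
  have hnodup := ((Walk.isCycle_rotate hu).2 hp).isTrail.edges_nodup
  generalize (p.rotate u hu).takeUntil v hvr = P at hspec
  generalize (p.rotate u hu).dropUntil v hvr = Q at hspec
  rw [← hspec] at hmem hnodup
  cases P with
  | nil => exact huv rfl
  | @cons _ y _ huy P =>
  cases Q with
  | nil => exact huv rfl
  | @cons _ z _ hvz Q =>
  simp only [Walk.edges_append, Walk.edges_cons, List.cons_append, List.nodup_cons,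
    List.mem_append, List.mem_cons, List.nodup_append, not_or] at hnodup hmem
  obtain ⟨⟨huyP, hne, -⟩, -, -, hdisj⟩ := hnodup
  have hyv : (G.deleteEdges {s(v, z), s(u, y)}).Reachable y v :=
    ⟨P.toDeleteEdges _ fun e he => by
      rintro (rfl | rfl)
      exacts [hdisj _ he _ (Or.inl rfl) rfl, huyP he]⟩
  have huv' : (G.deleteEdges {s(v, z), s(u, y)}).Reachable u v :=
    hreach.mono (deleteEdges_anti (by rintro e (rfl | rfl) <;> simp [hmem]))
  obtain ⟨w, c, hc, huyc, hvzc⟩ :=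
    exists_isCycle_mem_edges_notMem_edges huy hne (huv'.trans hyv.symm)
  exact hvzc ((hG _ _ p c hp hc ⟨_, (hmem _).2 (Or.inl rfl), huyc⟩ _).1 ((hmem _).2 (by simp)))

theorem mem_edges_cycleGraph_cycle {e : Sym2 (Fin (n + 3))} :
    e ∈ (cycleGraph.cycle n).edges ↔ e ∈ (cycleGraph (n + 3)).edgeSet := by
  classical
  have hcard : (cycleGraph (n + 3)).edgeFinset.card = n + 3 := by
    have := (cycleGraph (n + 3)).sum_degrees_eq_twice_card_edges
    simp only [cycleGraph_degree_three_le, Finset.sum_const, Finset.card_univ, Fintype.card_fin,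
      smul_eq_mul] at this
    omega
  have hsub : (cycleGraph.cycle n).edges.toFinset ⊆ (cycleGraph (n + 3)).edgeFinset := fun e he =>
    mem_edgeFinset.2 ((cycleGraph.cycle n).edges_subset_edgeSet (List.mem_toFinset.1 he))
  rw [← List.mem_toFinset, ← mem_edgeFinset, Finset.eq_of_subset_of_card_le hsub]
  rw [hcard, List.toFinset_card_of_nodup cycleGraph.isCycle_cycle.isTrail.edges_nodup,
    Walk.length_edges, cycleGraph.length_cycle]

theorem IsCactusForest.eq_of_reachable_sdiff_map (hG : IsCactusForest G)
    (f : (cycleGraph (n + 3)).Copy G) {i j : Fin (n + 3)}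
    (hreach : (G \ (cycleGraph (n + 3)).map f).Reachable (f i) (f j)) : i = j := by
  let p := (cycleGraph.cycle n).map f.toHom
  have hsupp (i : Fin (n + 3)) : f i ∈ p.support := by
    have hadj : (cycleGraph (n + 3)).Adj i (i + 1) := by simp [cycleGraph_adj]
    rw [Walk.support_map]
    exact List.mem_map_of_mem (Walk.mem_support_of_mem_edges
      (mem_edges_cycleGraph_cycle.2 hadj) (Sym2.mem_mk_left ..))
  have hle : G \ (cycleGraph (n + 3)).map f ≤ G.deleteEdges {e | e ∈ p.edges} := by
    intro u v huv
    refine deleteEdges_adj.2 ⟨huv.1, fun h => huv.2 ?_⟩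
    obtain ⟨e, he, heq⟩ := List.mem_map.1 (Walk.edges_map f.toHom _ ▸ h)
    have : s(u, v) ∈ ((cycleGraph (n + 3)).map f.toEmbedding).edgeSet := by
      rw [edgeSet_map]
      exact ⟨e, mem_edges_cycleGraph_cycle.1 he, heq⟩
    exact this
  by_contra hij
  exact hG.not_reachable_deleteEdges (cycleGraph.isCycle_cycle.map f.injective) (hsupp i)
    (hsupp j) (f.injective.ne hij) (hreach.mono hle)

theorem IsCactusForest.isIndContained (hG : IsCactusForest G) (hn : cycleGraph (n + 3) ⊑ G) :
    cycleGraph (n + 3) ⊴ G := by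
  obtain ⟨f⟩ := hn
  refine ⟨⟨f.toEmbedding, fun {i j} => ⟨fun hij => ?_, fun hij => f.toHom.map_adj hij⟩⟩⟩
  by_contra hne
  have hadj : (G \ (cycleGraph (n + 3)).map f).Adj (f i) (f j) := by
    refine ⟨hij, fun h => hne ?_⟩
    obtain ⟨k, l, hkl, hk, hl⟩ := (map_adj f.toEmbedding ..).1 h
    rwa [← f.injective hk, ← f.injective hl]
  exact G.loopless.irrefl _ (hG.eq_of_reachable_sdiff_map f hadj.reachable ▸ hij)

theorem freeChoosable_of_isBridge {u v : V} (hba : b + min b c ≤ a) (huv : G.Adj u v)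
    (hbridge : G.IsBridge s(u, v)) (hG : FreeChoosable (G \ edge u v) a b c) :
    FreeChoosable G a b c := by
  have hnot : ¬(G \ edge u v).Reachable u v := isBridge_iff.1 hbridge
  rw [← sdiff_sup_cancel ((edge_le_iff G).2 (Or.inr huv))]
  refine hG.sup (freeChoosable_edge hba huv.ne) ?_
  rintro x ⟨x', hx⟩ y ⟨y', hy⟩ hxy
  obtain ⟨⟨rfl, rfl⟩ | ⟨rfl, rfl⟩, -⟩ := (edge_adj ..).1 hx <;>
    obtain ⟨⟨rfl, rfl⟩ | ⟨rfl, rfl⟩, -⟩ := (edge_adj ..).1 hy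
  exacts [rfl, (hnot hxy).elim, (hnot hxy.symm).elim, rfl]

theorem IsCactusForest.freeChoosable_of_sdiff_map (hG : IsCactusForest G) (hba : b ≤ a)
    (f : (cycleGraph (n + 3)).Copy G) (hcyc : FreeChoosable (cycleGraph (n + 3)) a b c)
    (hsdiff : FreeChoosable (G \ (cycleGraph (n + 3)).map f) a b c) : FreeChoosable G a b c := by
  have hle : (cycleGraph (n + 3)).map f.toEmbedding ≤ G :=
    (map_le_iff_le_comap _ _ _).2 fun i j hij => f.toHom.map_adj hij
  rw [← sdiff_sup_cancel hle]
  refine hsdiff.sup (hcyc.map hba f.toEmbedding) ?_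
  rw [support_map]
  rintro _ ⟨i, -, rfl⟩ _ ⟨j, -, rfl⟩ hij
  exact congrArg f (hG.eq_of_reachable_sdiff_map f hij)

theorem IsCactusForest.freeChoosable_of_finite [Finite V] (hG : IsCactusForest G)
    (hba : b + min b c ≤ a)
    (hcyc : ∀ n, cycleGraph (n + 3) ⊑ G → FreeChoosable (cycleGraph (n + 3)) a b c) :
    FreeChoosable G a b c := by
  induction G using WellFoundedLT.induction with
  | ind G ih =>
  have hsdiff {K : SimpleGraph V} {u v : V} (huv : G.Adj u v) (hK : K.Adj u v) :
      FreeChoosable (G \ K) a b c := by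
    have hle : G \ K ⊑ G := .of_le sdiff_le
    have hlt : G \ K < G := lt_of_le_of_ne sdiff_le fun h => (h.ge huv).2 hK
    exact ih _ hlt (hG.of_isContained hle) fun n hn => hcyc n (hn.trans hle)
  by_cases hac : G.IsAcyclic
  · rcases eq_or_ne G ⊥ with rfl | hbot
    · exact freeChoosable_bot (by omega)
    · obtain ⟨u, v, huv⟩ := ne_bot_iff_exists_adj.1 hbot
      exact freeChoosable_of_isBridge hba huv (isAcyclic_iff_forall_adj_isBridge.1 hac huv)
        (hsdiff huv (by simp [edge_adj, huv.ne]))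
  · rw [isAcyclic_iff_free_cycleGraph] at hac
    push Not at hac
    obtain ⟨_, hn, ⟨f⟩⟩ := hac
    obtain ⟨n, rfl⟩ := Nat.exists_eq_add_of_le' hn
    have hadj : (cycleGraph (n + 3)).Adj 0 1 := by simp [cycleGraph_adj]
    exact hG.freeChoosable_of_sdiff_map (by omega) f (hcyc n ⟨f⟩)
      (hsdiff (f.toHom.map_adj hadj) ((map_adj f.toEmbedding ..).2 ⟨0, 1, hadj, rfl, rfl⟩))

theorem IsCactusForest.freeChoosable (hG : IsCactusForest G) (hba : b + min b c ≤ a)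
    (hcyc : ∀ n, cycleGraph (n + 3) ⊑ G → FreeChoosable (cycleGraph (n + 3)) a b c) :
    FreeChoosable G a b c := by
  refine freeChoosable_of_forall_finite_induce fun s hs => ?_
  have := hs.to_subtype
  have hle : G.induce s ⊑ G := ⟨Copy.induce G s⟩
  exact (hG.of_isContained hle).freeChoosable_of_finite hba fun n hn => hcyc n (hn.trans hle)

end CactusForest

section PathColoring

variable {α ι : Type*} [DecidableEq α]

theorem exists_subset_card_eq_forall_le (W : Finset α) (f : α → ℕ) {b : ℕ} (hb : b ≤ W.card) :
    ∃ T ⊆ W, T.card = b ∧ ∀ t ∈ T, ∀ w ∈ W \ T, f t ≤ f w := by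
  induction b with
  | zero => exact ⟨∅, by simp, rfl, by simp⟩
  | succ b ih =>
    obtain ⟨T, hTW, hTb, hT⟩ := ih (by omega)
    have hne : (W \ T).Nonempty := by
      rw [← Finset.card_pos, Finset.card_sdiff_of_subset hTW]
      omega
    obtain ⟨m, hm, hmin⟩ := Finset.exists_min_image (W \ T) f hne
    have hmW := Finset.mem_sdiff.1 hm
    refine ⟨insert m T, Finset.insert_subset hmW.1 hTW, ?_, fun t ht w hw => ?_⟩
    · rw [Finset.card_insert_of_notMem hmW.2, hTb]
    · have hwT : w ∈ W \ T := Finset.sdiff_subset_sdiff subset_rfl (Finset.subset_insert m T) hw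
      rcases Finset.mem_insert.1 ht with rfl | ht
      · exact hmin w hwT
      · exact hT t ht w hwT

/-- The sets of size at most `b` respecting the capacities `h` of a chain form a laminar matroid; a
basis is found by preferring the elements that lie in the fewest members of the chain. -/
theorem exists_subset_card_eq_of_chain (W : Finset α) (I : Finset ι) (X : ι → Finset α)
    (hX : ∀ p ∈ I, ∀ q ∈ I, X p ⊆ X q ∨ X q ⊆ X p) (h : ι → ℤ) (hnonneg : ∀ p ∈ I, 0 ≤ h p)
    {b : ℕ} (hb : b ≤ W.card) (hcap : ∀ p ∈ I, (b : ℤ) ≤ (W \ X p).card + h p) :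
    ∃ T ⊆ W, T.card = b ∧ ∀ p ∈ I, ((T ∩ X p).card : ℤ) ≤ h p := by
  classical
  obtain ⟨T, hTW, hTb, hT⟩ :=
    exists_subset_card_eq_forall_le W (fun x => (I.filter fun p => x ∈ X p).card) hb
  refine ⟨T, hTW, hTb, fun p hp => ?_⟩
  rcases (T ∩ X p).eq_empty_or_nonempty with he | ⟨x, hx⟩
  · simpa [he] using hnonneg p hp
  obtain ⟨hxT, hxp⟩ := Finset.mem_inter.1 hx
  have hsub : W \ X p ⊆ T \ X p := by
    intro y hy
    obtain ⟨hyW, hyp⟩ := Finset.mem_sdiff.1 hy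
    refine Finset.mem_sdiff.2 ⟨?_, hyp⟩
    by_contra hyT
    refine (hT x hxT y (Finset.mem_sdiff.2 ⟨hyW, hyT⟩)).not_gt (Finset.card_lt_card ?_)
    rw [Finset.ssubset_iff_of_subset]
    · exact ⟨p, by simp [hp, hxp], by simp [hyp]⟩
    · intro q hq
      rw [Finset.mem_filter] at hq ⊢
      exact ⟨hq.1, (hX p hp q hq.1).elim (fun hs => hs hxp) fun hs => (hyp (hs hq.2)).elim⟩
  have hle := Finset.card_le_card hsub
  have hsplit := Finset.card_inter_add_card_sdiff T (X p)
  have hcap := hcap p hp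
  omega

/-- The colors taken at vertex `j` when, running along the path `p, p + 1, …` with lists `A`, every
color is taken as soon as it is available. This chooses, for each color, a largest independent
set among the vertices `p, …, j` that have it in their list. It is empty for `j < p`. -/
def greedy (A : ℕ → Finset α) (p : ℕ) : ℕ → Finset α
  | 0 => if p = 0 then A 0 else ∅
  | j + 1 => if p ≤ j + 1 then A (j + 1) \ greedy A p j else ∅

/-- The excess of the greedy choice over the demand `b` on the interval `p, …, j`. -/
def surplus (A : ℕ → Finset α) (b p j : ℕ) : ℤ :=
  ∑ t ∈ Finset.Icc p j, ((greedy A p t).card - b : ℤ)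

variable (A : ℕ → Finset α) (b p : ℕ)

theorem greedy_of_lt {j : ℕ} (hj : j < p) : greedy A p j = ∅ := by
  cases j with
  | zero => exact if_neg hj.ne'
  | succ j => exact if_neg hj.not_ge

theorem greedy_self : greedy A p p = A p := by
  cases p with
  | zero => rfl
  | succ p => rw [greedy, if_pos le_rfl, greedy_of_lt _ _ p.lt_succ_self, Finset.sdiff_empty]

theorem greedy_succ {p j : ℕ} (hj : p ≤ j) : greedy A p (j + 1) = A (j + 1) \ greedy A p j :=
  if_pos (hj.trans j.le_succ)

theorem greedy_subset (j : ℕ) : greedy A p j ⊆ A j := by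
  cases j <;> rw [greedy] <;> split_ifs <;> simp

theorem greedy_subset_or_subset (q j : ℕ) :
    greedy A p j ⊆ greedy A q j ∨ greedy A q j ⊆ greedy A p j := by
  induction j with
  | zero => rw [greedy, greedy]; split_ifs <;> simp
  | succ j ih =>
    rw [greedy, greedy]
    split_ifs
    · exact ih.symm.imp (Finset.sdiff_subset_sdiff subset_rfl)
        (Finset.sdiff_subset_sdiff subset_rfl)
    all_goals simp

theorem surplus_self : surplus A b p p = (A p).card - b := by
  simp [surplus, greedy_self]

theorem surplus_succ {p j : ℕ} (hj : p ≤ j) :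
    surplus A b p (j + 1) = surplus A b p j + (greedy A p (j + 1)).card - b := by
  rw [surplus, Finset.sum_Icc_succ_top (hj.trans j.le_succ), surplus]
  ring

variable {A b}

/-- Hall's theorem for multicolorings of a path. The induction needs the set `S` of colors forbidden
at the last vertex. -/
theorem exists_path_coloring_avoiding {i : ℕ}
    (hsurplus : ∀ p j, p ≤ j → j < i → 0 ≤ surplus A b p j) (S : Finset α)
    (hS : ∀ p ≤ i, ((S ∩ greedy A p i).card : ℤ) ≤ surplus A b p i) :
    ∃ φ : ℕ → Finset α, (∀ j ≤ i, φ j ⊆ A j ∧ (φ j).card = b) ∧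
      (∀ j < i, Disjoint (φ j) (φ (j + 1))) ∧ Disjoint (φ i) S := by
  have hlast (i : ℕ) (S : Finset α) (h : ((S ∩ greedy A i i).card : ℤ) ≤ surplus A b i i) :
      b ≤ (A i \ S).card := by
    rw [surplus_self, greedy_self] at h
    have := Finset.card_sdiff_add_card_inter (A i) S
    rw [Finset.inter_comm] at this
    omega
  induction i generalizing S with
  | zero =>
    obtain ⟨T, hT, hTb⟩ := Finset.exists_subset_card_eq (hlast 0 S (hS 0 le_rfl))
    refine ⟨fun _ => T, fun j hj => ?_, fun j hj => (Nat.not_lt_zero j hj).elim,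
      Finset.disjoint_of_subset_left hT Finset.sdiff_disjoint⟩
    rw [Nat.le_zero.1 hj]
    exact ⟨hT.trans Finset.sdiff_subset, hTb⟩
  | succ i ih =>
    obtain ⟨T, hTW, hTb, hT⟩ : ∃ T ⊆ A (i + 1) \ S, T.card = b ∧
        ∀ p ∈ range (i + 1), ((T ∩ greedy A p i).card : ℤ) ≤ surplus A b p i := by
      refine exists_subset_card_eq_of_chain _ _ _
        (fun p _ q _ => greedy_subset_or_subset A p q i) _
        (fun p hp => hsurplus p i (Finset.mem_range_succ_iff.1 hp) i.lt_succ_self)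
        (hlast _ S (hS _ le_rfl)) fun p hp => ?_
      have hpi := Finset.mem_range_succ_iff.1 hp
      have h := hS p (hpi.trans i.le_succ)
      have hcard := Finset.card_sdiff_add_card_inter (greedy A p (i + 1)) S
      rw [Finset.inter_comm] at hcard
      rw [surplus_succ A b hpi] at h
      rw [sdiff_right_comm, ← greedy_succ A hpi]
      omega
    obtain ⟨φ, hφ, hdisj, hφT⟩ := ih (fun p j hp hj => hsurplus p j hp (by omega)) T
      fun p hp => hT p (Finset.mem_range_succ_iff.2 hp)
    refine ⟨Function.update φ (i + 1) T, fun j hj => ?_, fun j hj => ?_, ?_⟩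
    · rcases hj.lt_or_eq with hj | rfl
      · simpa [hj.ne] using hφ j (by omega)
      · simpa using ⟨hTW.trans Finset.sdiff_subset, hTb⟩
    · rcases (Nat.lt_succ_iff.1 hj).lt_or_eq with hj | rfl
      · simpa [show j ≠ i + 1 by omega, hj.ne] using hdisj j hj
      · simpa using hφT
    · simpa using Finset.disjoint_of_subset_left hTW Finset.sdiff_disjoint

theorem exists_path_coloring {i : ℕ} (hsurplus : ∀ p j, p ≤ j → j ≤ i → 0 ≤ surplus A b p j) :
    ∃ φ : ℕ → Finset α, (∀ j ≤ i, φ j ⊆ A j ∧ (φ j).card = b) ∧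
      ∀ j < i, Disjoint (φ j) (φ (j + 1)) := by
  obtain ⟨φ, hφ, hdisj, -⟩ := exists_path_coloring_avoiding
    (fun p j hp hj => hsurplus p j hp hj.le) ∅ fun p hp => by simpa using hsurplus p i hp le_rfl
  exact ⟨φ, hφ, hdisj⟩

end PathColoring

section ExtremalOverlap

/-- The overlaps of consecutive lists that are worst for coloring a path with lists of size `a`, of
which the first has lost `min b c` colors: subject to the bound `c`, each overlap is as large as
its predecessor permits. -/
def extremalOverlap (a b c : ℕ) : ℕ → ℕ
  | 0 => min b c
  | j + 1 => min c (a - extremalOverlap a b c j)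

/-- The numerical criterion for the cycle of length `l + 2` to be `(a, b, c)`-free-choosable. Its
second part bounds the demand of the `l + 1` uncolored vertices when both ends of their path lose
`min b c` colors to the precolored vertex. -/
def CycleBound (a b c l : ℕ) : Prop :=
  b + min b c ≤ a ∧
    (l + 1) * b + min b c + ∑ j ∈ range (l + 1), extremalOverlap a b c j ≤ (l + 1) * a

variable {a b c : ℕ}

theorem extremalOverlap_le (j : ℕ) : extremalOverlap a b c j ≤ c := by
  cases j <;> simp [extremalOverlap]

theorem min_le_extremalOverlap_and_add_le (h : b + min b c ≤ a) (j : ℕ) :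
    min b c ≤ extremalOverlap a b c j ∧ extremalOverlap a b c j + b ≤ a := by
  induction j with
  | zero => rw [extremalOverlap]; omega
  | succ j ih => rw [extremalOverlap]; omega

theorem min_le_extremalOverlap_add_succ (j : ℕ) :
    min (2 * c) a ≤ extremalOverlap a b c (j + 1) + extremalOverlap a b c (j + 2) := by
  have := extremalOverlap_le (a := a) (b := b) (c := c) j
  simp only [extremalOverlap]
  omega

theorem sum_le_sum_extremalOverlap {x : ℕ → ℕ} {k : ℕ} (hx₀ : x 0 ≤ min b c)
    (hxc : ∀ i ≤ k, x i ≤ c) (hxa : ∀ i < k, x i + x (i + 1) ≤ a) :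
    ∑ i ∈ range (k + 1), x i ≤ ∑ i ∈ range (k + 1), extremalOverlap a b c i := by
  induction k using Nat.twoStepInduction with
  | zero => simpa [extremalOverlap] using hx₀
  | one =>
    have := hxc 1 le_rfl
    have : x 0 + x 1 ≤ a := hxa 0 one_pos
    simp only [sum_range_succ, sum_range_zero, extremalOverlap]
    omega
  | more k ih =>
    have := ih (fun i hi => hxc i (by omega)) fun i hi => hxa i (by omega)
    have := hxc (k + 1) (by omega)
    have := hxc (k + 2) (by omega)
    have : x (k + 1) + x (k + 2) ≤ a := hxa (k + 1) (by omega)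
    have := min_le_extremalOverlap_add_succ (a := a) (b := b) (c := c) k
    rw [sum_range_succ _ (k + 2), sum_range_succ _ (k + 1), sum_range_succ _ (k + 2),
      sum_range_succ _ (k + 1)]
    omega

theorem sum_le_sum_extremalOverlap_of_last {x : ℕ → ℕ} {k : ℕ} (hxk : x k ≤ min b c)
    (hxc : ∀ i ≤ k, x i ≤ c) (hxa : ∀ i < k, x i + x (i + 1) ≤ a) :
    ∑ i ∈ range (k + 1), x i ≤ ∑ i ∈ range (k + 1), extremalOverlap a b c i := by
  rw [← sum_range_reflect]
  refine sum_le_sum_extremalOverlap (x := fun i => x (k + 1 - 1 - i)) (by simpa using hxk)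
    (fun i _ => hxc _ (by omega)) fun i hi => ?_
  have := hxa (k - (i + 1)) (by omega)
  rwa [show k - (i + 1) + 1 = k + 1 - 1 - i by omega, add_comm] at this

theorem sum_extremalOverlap_add_le (h : b + min b c ≤ a) (k : ℕ) :
    ∑ i ∈ range k, extremalOverlap a b c i + k * b ≤ k * a := by
  induction k with
  | zero => simp
  | succ k ih =>
    have := (min_le_extremalOverlap_and_add_le h k).2
    rw [sum_range_succ]
    linarith

theorem CycleBound.mono {l m : ℕ} (h : CycleBound a b c l) (hlm : l ≤ m) :
    CycleBound a b c m := by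
  induction m, hlm using Nat.le_induction with
  | base => exact h
  | succ m _ ih =>
    refine ⟨ih.1, ?_⟩
    have := ih.2
    have := (min_le_extremalOverlap_and_add_le ih.1 (m + 1)).2
    rw [sum_range_succ]
    linarith

end ExtremalOverlap

section PathSurplus

variable {α : Type*} {A : ℕ → Finset α} {a b c p k l : ℕ}

theorem mul_le_sum_card_add (hA : ∀ t, p < t → t < p + k → a ≤ (A t).card) :
    (k + 1) * a ≤ ∑ i ∈ range (k + 1), (A (p + i)).card + (a - (A p).card) +
      (a - (A (p + k)).card) := by
  calc
    _ = ∑ _i ∈ range (k + 1), a := by simp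
    _ ≤ ∑ i ∈ range (k + 1), ((A (p + i)).card + (if i = 0 then a - (A p).card else 0) +
        if i = k then a - (A (p + k)).card else 0) := sum_le_sum fun i hi => ?_
    _ = _ := by simp [sum_add_distrib]
  have hik := mem_range_succ_iff.1 hi
  split_ifs with h0 hk hk
  · simp only [h0, add_zero]
    omega
  · simp only [h0, add_zero]
    omega
  · rw [hk]
    omega
  · exact hA _ (by omega) (by omega)

variable [DecidableEq α]

/-- The number of colors of the list of `t + 1` that the greedy choice started at `p` takes at `t`,
and hence cannot take at `t + 1`. -/
def overlap (A : ℕ → Finset α) (p t : ℕ) : ℕ :=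
  (A (t + 1) ∩ greedy A p t).card

theorem card_greedy_succ_add_overlap {t : ℕ} (ht : p ≤ t) :
    (greedy A p (t + 1)).card + overlap A p t = (A (t + 1)).card := by
  rw [greedy_succ A ht, overlap, card_sdiff_add_card_inter]

theorem overlap_le_card (t : ℕ) : overlap A p t ≤ (A (t + 1)).card :=
  card_le_card inter_subset_left

theorem overlap_add_overlap_succ_le {t : ℕ} (ht : p ≤ t) :
    overlap A p t + overlap A p (t + 1) ≤ (A (t + 1)).card := by
  have : overlap A p (t + 1) ≤ (greedy A p (t + 1)).card := card_le_card inter_subset_right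
  have := card_greedy_succ_add_overlap (A := A) ht
  omega

theorem surplus_add (A : ℕ → Finset α) (b p k : ℕ) :
    surplus A b p (p + k) =
      ∑ i ∈ range (k + 1), ((A (p + i)).card : ℤ) - ∑ i ∈ range k, (overlap A p (p + i) : ℤ) -
        (k + 1) * b := by
  induction k with
  | zero => simp [surplus_self]
  | succ k ih =>
    have := card_greedy_succ_add_overlap (A := A) (Nat.le_add_right p k)
    rw [← add_assoc, surplus_succ A b (Nat.le_add_right p k), ih,
      sum_range_succ _ (k + 1), sum_range_succ (fun i => (overlap A p (p + i) : ℤ)),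
      ← add_assoc p k 1]
    push_cast
    linarith

theorem sum_overlap_add_sub_left_le (hp : (A p).card ≤ a ∧ a ≤ (A p).card + min b c)
    (hA : ∀ t, p < t → t < p + k → (A t).card ≤ a)
    (hc : ∀ t, p ≤ t → t < p + k → overlap A p t ≤ c) :
    ∑ i ∈ range k, overlap A p (p + i) + (a - (A p).card) ≤
      ∑ i ∈ range (k + 1), extremalOverlap a b c i := by
  let x : ℕ → ℕ := fun i => i.casesOn (a - (A p).card) fun i => overlap A p (p + i)
  have hx := sum_le_sum_extremalOverlap (a := a) (b := b) (c := c) (x := x) (k := k)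
    (show a - (A p).card ≤ _ by omega) (fun i hi => ?_) fun i hi => ?_
  · rwa [sum_range_succ'] at hx
  · cases i with
    | zero => exact show a - (A p).card ≤ c by omega
    | succ i => exact hc _ (by omega) (by omega)
  · cases i with
    | zero =>
      have : overlap A p p ≤ (A p).card := by
        simpa [overlap, greedy_self] using card_le_card (inter_subset_right (s₁ := A (p + 1)))
      exact show a - (A p).card + overlap A p p ≤ a by omega
    | succ i =>
      exact (overlap_add_overlap_succ_le (Nat.le_add_right p i)).trans (hA _ (by omega) (by omega))

theorem sum_overlap_add_sub_right_le
    (hk : (A (p + k)).card ≤ a ∧ a ≤ (A (p + k)).card + min b c)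
    (hA : ∀ t, p < t → t < p + k → (A t).card ≤ a)
    (hc : ∀ t, p ≤ t → t < p + k → overlap A p t ≤ c) :
    ∑ i ∈ range k, overlap A p (p + i) + (a - (A (p + k)).card) ≤
      ∑ i ∈ range (k + 1), extremalOverlap a b c i := by
  let x : ℕ → ℕ := fun i => if i < k then overlap A p (p + i) else a - (A (p + k)).card
  have hx_lt {i : ℕ} (hi : i < k) : x i = overlap A p (p + i) := if_pos hi
  have hx_last : x k = a - (A (p + k)).card := if_neg (lt_irrefl k)
  rw [← hx_last, ← sum_congr rfl fun i hi => hx_lt (mem_range.1 hi), ← sum_range_succ]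
  refine sum_le_sum_extremalOverlap_of_last (by omega) (fun i hi => ?_) fun i hi => ?_
  · rcases hi.lt_or_eq with hi | rfl
    · exact hx_lt hi ▸ hc _ (by omega) (by omega)
    · omega
  · rw [hx_lt hi]
    rcases (show i + 1 ≤ k from hi).lt_or_eq with hi' | rfl
    · rw [hx_lt hi']
      exact (overlap_add_overlap_succ_le (Nat.le_add_right p i)).trans (hA _ (by omega) (by omega))
    · have : overlap A p (p + i) ≤ (A (p + (i + 1))).card := overlap_le_card _
      omega

theorem surplus_nonneg_of_sum_overlap_le (hA : ∀ t, p < t → t < p + k → a ≤ (A t).card)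
    (h : ∑ i ∈ range k, overlap A p (p + i) + (a - (A p).card) + (a - (A (p + k)).card) +
      (k + 1) * b ≤ (k + 1) * a) :
    0 ≤ surplus A b p (p + k) := by
  have := mul_le_sum_card_add hA
  rw [surplus_add]
  zify at this h
  linarith

theorem CycleBound.surplus_nonneg (h : CycleBound a b c l) (hA : ∀ t ≤ l, (A t).card ≤ a)
    (hinner : ∀ t, 0 < t → t < l → (A t).card = a)
    (hends : ∀ t ≤ l, a ≤ (A t).card + min b c)
    (hsep : ∀ t < l, (A t ∩ A (t + 1)).card ≤ c) {j : ℕ} (hpj : p ≤ j) (hjl : j ≤ l) :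
    0 ≤ surplus A b p j := by
  obtain ⟨k, rfl⟩ := Nat.exists_eq_add_of_le hpj
  have hc (t : ℕ) (_ : p ≤ t) (ht : t < p + k) : overlap A p t ≤ c := by
    refine (card_le_card ?_).trans (hsep t (by omega))
    rw [inter_comm]
    exact inter_subset_inter_right (greedy_subset A p t)
  have hleft := sum_overlap_add_sub_left_le (b := b) (c := c) ⟨hA p (by omega), hends p (by omega)⟩
    (fun t _ htk => hA t (by omega)) hc
  have hright := sum_overlap_add_sub_right_le (b := b) (c := c) ⟨hA _ hjl, hends _ hjl⟩
    (fun t _ htk => hA t (by omega)) hc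
  have hab := sum_extremalOverlap_add_le h.1 (k + 1)
  have hp := hends p (by omega)
  have hj := hends _ hjl
  rcases k.eq_zero_or_pos with rfl | hk
  · have := h.1
    rw [add_zero, surplus_self]
    omega
  refine surplus_nonneg_of_sum_overlap_le (fun t ht htk => (hinner t (by omega) (by omega)).ge) ?_
  rcases p.eq_zero_or_pos with rfl | hp₀
  · rcases hjl.lt_or_eq with hjl' | rfl
    · have := hinner _ (by omega) hjl'
      omega
    · have := h.2
      simp only [zero_add] at hleft hright this ⊢
      omega
  · have := hinner _ hp₀ (by omega)
    omega

end PathSurplus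

section CycleGraph

variable {a b c n : ℕ}

theorem forall_cycleGraph_adj_iff {β : Type*} {R : β → β → Prop} (hR : ∀ s t, R s t → R t s)
    (F : ℕ → β) :
    (∀ u v : Fin (n + 2), (cycleGraph (n + 2)).Adj u v → R (F u) (F v)) ↔
      (∀ i ≤ n, R (F i) (F (i + 1))) ∧ R (F (n + 1)) (F 0) := by
  have hstep : (∀ u v : Fin (n + 2), (cycleGraph (n + 2)).Adj u v → R (F u) (F v)) ↔
      ∀ v : Fin (n + 2), R (F v) (F (v + 1 : Fin (n + 2))) := by
    refine ⟨fun h v => h v (v + 1) (by simp [cycleGraph_adj]), fun h u v huv => ?_⟩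
    rcases cycleGraph_adj.1 huv with huv | huv
    · obtain rfl := sub_eq_iff_eq_add'.1 huv
      exact hR _ _ (h v)
    · obtain rfl := sub_eq_iff_eq_add'.1 huv
      exact h u
  rw [hstep, Fin.forall_fin_succ']
  refine and_congr ⟨fun h i hi => ?_, fun h i => ?_⟩ (by simp)
  · simpa using h ⟨i, by omega⟩
  · simpa using h i (by omega)

theorem freeChoosable_cycleGraph_iff_forall_nat :
    FreeChoosable (cycleGraph (n + 2)) a b c ↔
      ∀ L : ℕ → Finset ℕ, (∀ i ≤ n + 1, (L i).card = a) →
        (∀ i ≤ n, (L i ∩ L (i + 1)).card ≤ c) → (L (n + 1) ∩ L 0).card ≤ c →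
        ∀ C ⊆ L 0, C.card = b → ∃ φ : ℕ → Finset ℕ, φ 0 = C ∧
          (∀ i ≤ n + 1, φ i ⊆ L i ∧ (φ i).card = b) ∧
          (∀ i ≤ n, Disjoint (φ i) (φ (i + 1))) ∧ Disjoint (φ (n + 1)) (φ 0) := by
  have hsymm (s t : Finset ℕ) (h : (s ∩ t).card ≤ c) : (t ∩ s).card ≤ c := inter_comm s t ▸ h
  have hdisj_symm (s t : Finset ℕ) (h : Disjoint s t) : Disjoint t s := h.symm
  obtain ⟨ν, hν⟩ : ∃ ν : ℕ → Fin (n + 2), ∀ v : Fin (n + 2), ν v = v :=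
    ⟨Fin.ofNat (n + 2), fun v => Fin.ext (Nat.mod_eq_of_lt v.2)⟩
  have hν₀ : ν 0 = 0 := hν 0
  constructor
  · intro h L hL hsep hlast C hC hCb
    obtain ⟨φ, ⟨hφ, hdisj⟩, hφC⟩ := h (fun v => L v) (fun v => hL v (by omega))
      ((forall_cycleGraph_adj_iff hsymm L).2 ⟨hsep, hlast⟩) 0 C hC hCb
    refine ⟨φ ∘ ν, by rwa [Function.comp, hν₀], fun i hi => ?_, ?_⟩
    · have hi : ν i = ⟨i, by omega⟩ := hν ⟨i, by omega⟩
      simpa [hi] using hφ (ν i)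
    · refine (forall_cycleGraph_adj_iff hdisj_symm (φ ∘ ν)).1 fun u v huv => ?_
      simpa [hν, disjoint_iff_inter_eq_empty] using hdisj u v huv
  · intro h L hL hsep v₀ C hC hCb
    have hadj {u v : Fin (n + 2)} (huv : (cycleGraph (n + 2)).Adj u v) (w : Fin (n + 2)) :
        (cycleGraph (n + 2)).Adj (w + u) (w + v) := by
      simpa [cycleGraph_adj] using huv
    obtain ⟨hsucc, hlast⟩ := (forall_cycleGraph_adj_iff (n := n) hsymm fun i => L (v₀ + ν i)).1
      fun u v huv => by simpa [hν] using hsep _ _ (hadj huv v₀)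
    obtain ⟨φ, hφC, hφ, hdisj⟩ := h (fun i => L (v₀ + ν i)) (fun i _ => hL _) hsucc hlast C
      (by simpa [hν₀] using hC) hCb
    refine ⟨fun v => φ (-v₀ + v : Fin (n + 2)), ⟨fun v => ?_, fun u v huv => ?_⟩,
      by simpa using hφC⟩
    · simpa [hν] using hφ (-v₀ + v : Fin (n + 2)) (Nat.lt_succ_iff.1 (Fin.isLt _))
    · exact disjoint_iff_inter_eq_empty.1 <|
        (forall_cycleGraph_adj_iff hdisj_symm φ).2 hdisj _ _ (hadj huv _)

theorem CycleBound.freeChoosable {l : ℕ} (h : CycleBound a b c l) :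
    FreeChoosable (cycleGraph (l + 2)) a b c := by
  rw [freeChoosable_cycleGraph_iff_forall_nat]
  intro L hL hsep hlast C hC hCb
  let A (t : ℕ) : Finset ℕ := if t = 0 ∨ t = l then L (t + 1) \ C else L (t + 1)
  have hAC {t : ℕ} (ht : t = 0 ∨ t = l) : A t = L (t + 1) \ C := if_pos ht
  have hAL (t : ℕ) : A t ⊆ L (t + 1) := by
    dsimp only [A]
    split_ifs <;> simp
  have hloss {t : ℕ} (ht : t = 0 ∨ t = l) : (L (t + 1) ∩ C).card ≤ min b c := by
    refine le_min (hCb ▸ card_le_card inter_subset_right) ?_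
    refine (card_le_card (inter_subset_inter_left hC)).trans ?_
    rcases ht with rfl | rfl
    · exact inter_comm (L 0) _ ▸ hsep 0 (Nat.zero_le l)
    · exact hlast
  have hA_ends (t : ℕ) (ht : t ≤ l) : a ≤ (A t).card + min b c := by
    have hLt := hL (t + 1) (by omega)
    by_cases hend : t = 0 ∨ t = l
    · have := card_sdiff_add_card_inter (L (t + 1)) C
      have := hloss hend
      rw [hAC hend]
      omega
    · rw [show A t = L (t + 1) from if_neg hend]
      omega
  obtain ⟨φ, hφ, hdisj⟩ := exists_path_coloring (A := A) (b := b) (i := l) fun p j hpj hjl =>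
    h.surplus_nonneg (fun t ht => (card_le_card (hAL t)).trans (hL _ (by omega)).le)
      (fun t h₀ hl => by rw [show A t = L (t + 1) from if_neg (by omega), hL _ (by omega)])
      hA_ends
      (fun t ht => (card_le_card (inter_subset_inter (hAL t) (hAL _))).trans (hsep _ (by omega)))
      hpj hjl
  have hφC {t : ℕ} (ht : t = 0 ∨ t = l) : Disjoint (φ t) C := by
    refine disjoint_of_subset_left (hφ t (by omega)).1 (hAC ht ▸ sdiff_disjoint)
  refine ⟨fun i => i.casesOn C φ, rfl, fun i hi => ?_, fun i hi => ?_, hφC (Or.inr rfl)⟩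
  · cases i with
    | zero => exact ⟨hC, hCb⟩
    | succ i => exact (hφ i (by omega)).imp_left fun h => h.trans (hAL i)
  · cases i with
    | zero => exact (hφC (Or.inl rfl)).symm
    | succ i => exact hdisj i (by omega)

end CycleGraph

section CycleNecessity

variable {a b c l : ℕ} {x : ℕ → ℕ}

theorem sum_card_le_of_disjoint_succ {α : Type*} [DecidableEq α] {φ N : ℕ → Finset α} {l : ℕ}
    (h₀ : φ 0 ⊆ N 0) (hsucc : ∀ i < l, φ (i + 1) ⊆ N (i + 1) ∪ N i)
    (hdisj : ∀ i < l, Disjoint (φ i) (φ (i + 1))) :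
    ∑ i ∈ range (l + 1), (φ i).card ≤ ∑ i ∈ range (l + 1), (N i).card := by
  suffices h : ∑ i ∈ range (l + 1), (φ i).card ≤
      ∑ i ∈ range l, (N i).card + (φ l ∩ N l).card by
    rw [sum_range_succ (fun i => (N i).card)]
    exact h.trans (Nat.add_le_add_left (card_le_card inter_subset_right) _)
  induction l with
  | zero => simp [inter_eq_left.2 h₀]
  | succ l ih =>
    have ih := ih (fun i hi => hsucc i (by omega)) fun i hi => hdisj i (by omega)
    have hd : Disjoint (φ (l + 1) \ N (l + 1)) (φ l ∩ N l) :=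
      disjoint_of_subset_left sdiff_subset
        (disjoint_of_subset_right inter_subset_left (hdisj l l.lt_succ_self).symm)
    have hle : φ (l + 1) \ N (l + 1) ∪ φ l ∩ N l ⊆ N l :=
      union_subset (sdiff_le_iff.2 (hsucc l l.lt_succ_self)) inter_subset_right
    have hle := card_le_card hle
    have := card_sdiff_add_card_inter (φ (l + 1)) (N (l + 1))
    rw [card_union_of_disjoint hd] at hle
    rw [sum_range_succ, sum_range_succ (fun i => (N i).card)]
    omega

/-- The lists on the cycle with vertices `0, …, l + 1` in which `i` and `i + 1` share `x i` colors,
`l + 1` and `0` share `x 0` colors, and all these sets of colors are disjoint except that the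
colors shared by `0` and its two neighbors coincide. -/
def cycleList (a l : ℕ) (x : ℕ → ℕ) : ℕ → Finset ℕ
  | 0 => colorBlock 0 a
  | i + 1 => colorBlock (i + 1) (a - x i - if i = l then x 0 else 0) ∪ colorBlock i (x i) ∪
      colorBlock 0 (if i = l then x 0 else 0)

theorem mem_cycleList_succ {i k : ℕ} : k ∈ cycleList a l x (i + 1) ↔
    k.unpair.1 = i + 1 ∧ k.unpair.2 + x i + (if i = l then x 0 else 0) < a ∨
      k.unpair.1 = i ∧ k.unpair.2 < x i ∨ k.unpair.1 = 0 ∧ i = l ∧ k.unpair.2 < x 0 := by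
  simp only [cycleList, mem_union, mem_colorBlock]
  split_ifs <;> omega

theorem card_cycleList (hl : l ≠ 0) (hxa : ∀ i < l, x i ≤ a) (hlast : x l + x 0 ≤ a) {i : ℕ}
    (hi : i ≤ l + 1) : (cycleList a l x i).card = a := by
  cases i with
  | zero => exact card_colorBlock 0 a
  | succ i =>
    have hdisj : Disjoint (colorBlock (i + 1) (a - x i - if i = l then x 0 else 0) ∪
        colorBlock i (x i)) (colorBlock 0 (if i = l then x 0 else 0)) := by
      simp only [Finset.disjoint_left, mem_union, mem_colorBlock]
      split_ifs <;> omega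
    rw [cycleList, card_union_of_disjoint hdisj,
      card_union_of_disjoint (disjoint_colorBlock (by omega) _ _)]
    simp only [card_colorBlock]
    split_ifs with h
    · subst h
      omega
    · have := hxa i (by omega)
      omega

theorem cycleList_inter_succ_subset (hl : 2 ≤ l) {i : ℕ} (hi : i ≤ l) :
    cycleList a l x i ∩ cycleList a l x (i + 1) ⊆ colorBlock i (x i) := by
  intro k hk
  rw [mem_inter, mem_cycleList_succ] at hk
  rw [mem_colorBlock]
  cases i with
  | zero =>
    rw [cycleList, mem_colorBlock] at hk
    omega
  | succ i =>
    rw [mem_cycleList_succ] at hk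
    omega

theorem cycleList_last_inter_zero_subset (hl : l ≠ 0) :
    cycleList a l x (l + 1) ∩ cycleList a l x 0 ⊆ colorBlock 0 (x 0) := by
  intro k hk
  rw [mem_inter, mem_cycleList_succ, cycleList, mem_colorBlock] at hk
  rw [mem_colorBlock]
  omega

theorem sum_sub_sub_ite_add (hxa : ∀ i < l, x i ≤ a) (hlast : x l + x 0 ≤ a) :
    ∑ i ∈ range (l + 1), (a - x i - if i = l then x 0 else 0) +
      (∑ i ∈ range (l + 1), x i + x 0) = (l + 1) * a := by
  have hterm (i : ℕ) (hi : i ∈ range (l + 1)) :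
      (a - x i - if i = l then x 0 else 0) + (x i + if i = l then x 0 else 0) = a := by
    rw [mem_range] at hi
    split_ifs with hil
    · subst hil
      omega
    · have := hxa i (by omega)
      omega
  simpa [sum_add_distrib] using sum_const_nat hterm

theorem FreeChoosable.sum_le_of_cycleGraph (h : FreeChoosable (cycleGraph (l + 2)) a b c)
    (hl : 2 ≤ l) (hba : b ≤ a) (hx₀ : x 0 ≤ b) (hxc : ∀ i ≤ l, x i ≤ c)
    (hxa : ∀ i < l, x i + x (i + 1) ≤ a) (hlast : x l + x 0 ≤ a) :
    (l + 1) * b + x 0 + ∑ i ∈ range (l + 1), x i ≤ (l + 1) * a := by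
  have hcard (i t : ℕ) (s : Finset ℕ) (hs : s ⊆ colorBlock i t) : s.card ≤ t :=
    (card_le_card hs).trans_eq (card_colorBlock i t)
  have hxa' (i : ℕ) (hi : i < l) : x i ≤ a := (Nat.le_add_right ..).trans (hxa i hi)
  obtain ⟨φ, hφ₀, hφ, hdisj, hdisj_last⟩ :=
    freeChoosable_cycleGraph_iff_forall_nat.1 h (cycleList a l x)
      (fun i => card_cycleList (by omega) hxa' hlast)
      (fun i hi => (hcard _ _ _ (cycleList_inter_succ_subset hl hi)).trans (hxc i hi))
      ((hcard _ _ _ (cycleList_last_inter_zero_subset (by omega))).trans (hxc 0 (by omega)))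
      (colorBlock 0 b) (colorBlock_subset_colorBlock 0 hba) (card_colorBlock 0 b)
  have hφ_mem {i k : ℕ} (hi : i ≤ l) (hk : k ∈ φ (i + 1)) :
      k.unpair.1 = i + 1 ∧ k.unpair.2 + x i + (if i = l then x 0 else 0) < a ∨
        i ≠ 0 ∧ k.unpair.1 = i ∧ k.unpair.2 < x i := by
    have hk₀ (hil : i = 0 ∨ i = l) : ¬ (k.unpair.1 = 0 ∧ k.unpair.2 < b) := by
      rw [← mem_colorBlock, ← hφ₀]
      rcases hil with rfl | rfl
      · exact Finset.disjoint_right.1 (hdisj 0 hi) hk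
      · exact Finset.disjoint_left.1 hdisj_last hk
    have := mem_cycleList_succ.1 ((hφ (i + 1) (by omega)).1 hk)
    rcases eq_or_ne i 0 with rfl | hi₀ <;> omega
  let N (i : ℕ) : Finset ℕ := colorBlock (i + 1) (a - x i - if i = l then x 0 else 0)
  have hle := sum_card_le_of_disjoint_succ (φ := fun i => φ (i + 1)) (N := N) (l := l)
    (fun k hk => ?_) (fun i hi k hk => ?_) fun i hi => hdisj (i + 1) hi
  · have hφ_sum : ∑ i ∈ range (l + 1), (φ (i + 1)).card = (l + 1) * b := by
      rw [sum_const_nat fun i hi => (hφ (i + 1) (by have := mem_range.1 hi; omega)).2, card_range]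
    have := sum_sub_sub_ite_add hxa' hlast
    simp only [N, card_colorBlock] at hle
    omega
  · have := hφ_mem (Nat.zero_le l) hk
    rw [mem_colorBlock]
    omega
  · have := hφ_mem (i := i + 1) hi hk
    have := hxa i hi
    rw [mem_union, mem_colorBlock, mem_colorBlock, if_neg hi.ne]
    omega

end CycleNecessity

section FreeSeparation

variable {V : Type*} {G : SimpleGraph V} {a b c l n : ℕ}

theorem FreeChoosable.add_min_le (h : FreeChoosable G a b c) (hba : b ≤ a) (κ : G.Coloring ℕ)
    {u v : V} (huv : G.Adj u v) : b + min b c ≤ a := by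
  classical
  let e := min b c
  let L (w : V) : Finset ℕ :=
    if w = u then colorBlock 0 a
    else if w = v then colorBlock 0 e ∪ colorBlock 1 (a - e)
    else colorBlock (κ w + 2) a
  have hLu : L u = colorBlock 0 a := if_pos rfl
  have hLv : L v = colorBlock 0 e ∪ colorBlock 1 (a - e) := by simp [L, huv.ne']
  have hL (w : V) : (L w).card = a := by
    dsimp only [L]
    split_ifs
    · simp
    · rw [card_union_of_disjoint (disjoint_colorBlock one_ne_zero.symm _ _)]
      simp only [card_colorBlock]
      omega
    · simp
  have hsep (x y : V) (hxy : G.Adj x y) : L x ∩ L y ⊆ colorBlock 0 e := by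
    have := κ.valid hxy
    have := hxy.ne
    intro k hk
    rw [mem_inter] at hk
    dsimp only [L] at hk
    rw [mem_colorBlock]
    split_ifs at hk <;> simp only [mem_union, mem_colorBlock] at hk <;> grind
  obtain ⟨φ, ⟨hφ, hdisj⟩, hφu⟩ := h L hL
    (fun x y hxy => ((card_le_card (hsep x y hxy)).trans_eq (card_colorBlock 0 e)).trans
      (min_le_right b c)) u (colorBlock 0 b) (hLu ▸ colorBlock_subset_colorBlock 0 hba)
    (card_colorBlock 0 b)
  have hφv : φ v ⊆ colorBlock 1 (a - e) := by
    intro k hk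
    refine (mem_union.1 (hLv ▸ (hφ v).1 hk)).resolve_left fun hk₀ => ?_
    have : k ∈ φ u ∩ φ v :=
      mem_inter.2 ⟨hφu ▸ colorBlock_subset_colorBlock 0 (min_le_left b c) hk₀, hk⟩
    simp [hdisj u v huv] at this
  have := card_le_card hφv
  rw [(hφ v).2, card_colorBlock] at this
  omega

theorem FreeChoosable.add_min_le_of_cycleGraph (h : FreeChoosable (cycleGraph (n + 2)) a b c)
    (hba : b ≤ a) : b + min b c ≤ a :=
  h.add_min_le hba (Coloring.mk Fin.val fun h => Fin.val_ne_of_ne h.ne)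
    (u := 0) (v := 1) (by simp [cycleGraph_adj])

theorem FreeChoosable.cycleBound (h : FreeChoosable (cycleGraph (l + 2)) a b c) (hl : 2 ≤ l)
    (hba : b ≤ a) : CycleBound a b c l := by
  have hmin := h.add_min_le_of_cycleGraph hba
  have hz := min_le_extremalOverlap_and_add_le hmin
  refine ⟨hmin, h.sum_le_of_cycleGraph hl hba (min_le_left b c)
    (fun i _ => extremalOverlap_le i) (fun i _ => ?_) ?_⟩
  · rw [extremalOverlap]
    have := (hz i).2
    omega
  · have := (hz l).2
    rw [extremalOverlap]
    omega

theorem FreeChoosable.cycleGraph_mono {m : ℕ} (h : FreeChoosable (cycleGraph n) a b c)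
    (hn : 4 ≤ n) (hba : b ≤ a) (hnm : n ≤ m) : FreeChoosable (cycleGraph m) a b c := by
  obtain ⟨l, rfl⟩ := Nat.exists_eq_add_of_le' (show 2 ≤ n by omega)
  obtain ⟨k, rfl⟩ := Nat.exists_eq_add_of_le' (show 2 ≤ m by omega)
  exact ((h.cycleBound (by omega) hba).mono (by omega)).freeChoosable

theorem cycleBound_three_one_three (hl : 1 ≤ l) : CycleBound 3 1 3 l :=
  CycleBound.mono (l := 1) (by constructor <;> decide) hl

theorem IsCactusForest.colorable_three (hG : IsCactusForest G) : G.Colorable 3 := by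
  have hfree : FreeChoosable G 3 1 3 :=
    hG.freeChoosable (by decide) fun n _ =>
      (cycleBound_three_one_three (Nat.le_add_left 1 n)).freeChoosable
  obtain ⟨φ, hφ, hdisj⟩ := hfree.choosable (by decide) (fun _ => range 3) (by simp) (by simp)
  choose κ hκ using fun v => card_eq_one.1 (hφ v).2
  have hlt (v : V) : κ v < 3 := mem_range.1 ((hφ v).1 (by simp [hκ]))
  refine ⟨Coloring.mk (fun v => ⟨κ v, hlt v⟩) fun {u v} huv huv' => ?_⟩
  have := hdisj u v huv
  simp_all

theorem IsCactusForest.freeChoosable_cycleGraph (hG : IsCactusForest G)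
    (h : FreeChoosable G a b c) (hn : cycleGraph (n + 3) ⊑ G) :
    FreeChoosable (cycleGraph (n + 3)) a b c := by
  obtain ⟨κ⟩ := hG.colorable_three
  obtain ⟨f⟩ := hG.isIndContained hn
  exact h.comap f (Coloring.mk (fun v => (κ v : ℕ)) fun huv => Fin.val_ne_of_ne (κ.valid huv))

theorem IsCactusForest.freeChoosable_iff (hG : IsCactusForest G) (hba : b ≤ a)
    (hn : cycleGraph (n + 3) ⊑ G)
    (hmin : ∀ m, cycleGraph (m + 3) ⊑ G → 1 ≤ n ∧ n ≤ m ∨ m = n) :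
    FreeChoosable G a b c ↔ FreeChoosable (cycleGraph (n + 3)) a b c := by
  refine ⟨fun h => hG.freeChoosable_cycleGraph h hn, fun h =>
    hG.freeChoosable (h.add_min_le_of_cycleGraph hba) fun m hm => ?_⟩
  rcases hmin m hm with ⟨hn, hnm⟩ | rfl
  · exact h.cycleGraph_mono (by omega) hba (by omega)
  · exact h

end FreeSeparation

theorem fsep_cactus_general {V : Type*} (G : SimpleGraph V) (g a b : ℕ) (hG : IsCactusForest G)
    (hgirth : G.egirth = (g : ℕ∞)) (hba : b ≤ a)
    (hcond : 4 ≤ g ∨ ∀ (u : V) (p : G.Walk u u), p.IsCycle → p.length = 3) :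
    fsep G a b = fsep (cycleGraph g) a b := by
  have hcycle : ¬G.IsAcyclic := fun h => by simp [egirth_eq_top.2 h] at hgirth
  obtain ⟨u, p, hp, hpg⟩ := exists_egirth_eq_length.2 hcycle
  have hlen : p.length = g := by exact_mod_cast hpg.symm.trans hgirth
  obtain ⟨n, rfl⟩ := Nat.exists_eq_add_of_le' (hlen ▸ hp.three_le_length)
  have hn : cycleGraph (n + 3) ⊑ G := (cycleGraph_isContained_iff (by omega)).2 ⟨u, p, hp, hlen⟩
  have hmin (m : ℕ) (hm : cycleGraph (m + 3) ⊑ G) : 1 ≤ n ∧ n ≤ m ∨ m = n := by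
    obtain ⟨v, q, hq, hqm⟩ := (cycleGraph_isContained_iff (by omega)).1 hm
    rcases hcond with hg | htri
    · have : n + 3 ≤ q.length := by exact_mod_cast hgirth ▸ egirth_le_length hq
      omega
    · have := htri u p hp
      have := htri v q hq
      omega
  simp only [fsep, hG.freeChoosable_iff hba hn hmin]

theorem fsep_cactus {V : Type*} [Fintype V] (G : SimpleGraph V) (g a b : ℕ)
    (hG : IsCactus G) (hcyc : ∃ (u : V) (p : G.Walk u u), p.IsCycle)
    (hgirth : G.egirth = (g : ℕ∞)) (hb : 1 ≤ b) (hba : b ≤ a)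
    (hcond : 4 ≤ g ∨ ∀ (u : V) (p : G.Walk u u), p.IsCycle → p.length = 3) :
    fsep G a b = fsep (cycleGraph g) a b :=
  fsep_cactus_general G g a b hG.2 hgirth hba hcond
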